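/- Let m = (m_0, …, m_{l−1}) ∈ ℚ^l, let λ = (λ^0, …, λ^{l−1}) be an l-partition of n, and let N be a positive integer such that N + ⌊m_j⌋ ≥ ℓ(λ^j) for every j (where ⌊·⌋ denotes the integer part). For each j, let B^j be the sequence of rational numbers B^j_i := λ^j_i − i + N + m_j for i = 1, …, N + ⌊m_j⌋; let κ_m(λ) = (κ_1 ≥ κ_2 ≥ ⋯ ≥ κ_h) be all the entries of B^0, …, B^{l−1} arranged in weakly decreasing order, where h = lN + Σ_{j=0}^{l−1} ⌊m_j⌋, and set n_m(λ) := Σ_{i=1}^{h} (i−1)κ_i. Then n_m(λ) − n_m(∅) = n(λ̄) − Σ_{s=0}^{l−1} Σ_{(i,j)∈[λ^s]} Σ_{0≤t≤l−1, t≠s} min(h_{i,j}^{λ^s,λ^t} + m_s − m_t, 0), where n_m(∅) is computed for the empty l-partition with the same size N. -/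

import Mathlib

/-- A partition, encoded as a weakly decreasing, eventually-zero sequence of
natural numbers; `parts i` is the `(i+1)`-st part `λ_{i+1}` (0-indexed rows). -/
structure Ptn where
  parts : ℕ → ℕ
  antitone' : Antitone parts
  eventually_zero : ∃ N, ∀ i, N ≤ i → parts i = 0

namespace Ptn

/-- `conj p k` is the conjugate-partition part `λ'_{k+1} = #{i ≥ 1 : λ_i ≥ k+1}`. -/
noncomputable def conj (p : Ptn) (k : ℕ) : ℕ := Nat.card {i : ℕ // k < p.parts i}

/-- `|λ| = Σ_{i ≥ 1} λ_i`. -/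
noncomputable def size (p : Ptn) : ℕ := ∑ᶠ i, p.parts i

/-- `n(λ) = Σ_{i ≥ 1} (i-1) λ_i`. -/
noncomputable def nn (p : Ptn) : ℕ := ∑ᶠ i, i * p.parts i

/-- The empty partition. -/
def empty : Ptn := ⟨fun _ => 0, fun _ _ _ => le_rfl, ⟨0, fun _ _ => rfl⟩⟩

end Ptn

/-- The generalised hook length `h_{i,j}^{λ,μ} = λ_i - i + μ'_j - j + 1`, for the node
in (0-indexed) row `i` and column `j`, i.e. the 1-indexed node `(i+1, j+1)`. -/
noncomputable def ghook (lam mu : Ptn) (i j : ℕ) : ℤ :=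
  (lam.parts i : ℤ) - (i + 1) + (mu.conj j : ℤ) - (j + 1) + 1

/-- Given a finite multiset `κ` of rationals, arrange its elements in weakly decreasing
order `κ_1 ≥ κ_2 ≥ ⋯ ≥ κ_h` and form `Σ_{i=1}^{h} (i-1) κ_i`. -/
noncomputable def nmOf (M : Multiset ℚ) : ℚ :=
  ∑ i ∈ Finset.range (M.sort (· ≥ ·)).length, (i : ℚ) * ((M.sort (· ≥ ·)).getD i 0)

open Finset

namespace Ptn

/-- The rows meeting column `k` form the initial segment of length `p.conj k`. -/
theorem lt_conj_iff (p : Ptn) (i k : ℕ) : i < p.conj k ↔ k < p.parts i := by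
  have hex : ∃ c, p.parts c ≤ k := by
    obtain ⟨N, hN⟩ := p.eventually_zero
    exact ⟨N, by simp [hN N le_rfl]⟩
  have hmem : ∀ i, k < p.parts i ↔ i < Nat.find hex := by
    intro i
    rw [Nat.lt_find_iff]
    exact ⟨fun h j hj => not_le.mpr (h.trans_le (p.antitone' hj)), fun h => not_le.mp (h i le_rfl)⟩
  have hconj : p.conj k = Nat.find hex := by
    rw [conj, Nat.card_congr (Equiv.subtypeEquivRight hmem)]
    exact Nat.card_eq_card_toFinset (Set.Iio _) |>.trans (by simp)
  rw [hconj, hmem]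

theorem conj_le_of_parts_eq_zero (p : Ptn) {A : ℕ} (hA : ∀ i, A ≤ i → p.parts i = 0) (k : ℕ) :
    p.conj k ≤ A := by
  by_contra! h
  have := (p.lt_conj_iff A k).1 h
  simp [hA A le_rfl] at this

/-- Summing over the nodes of a partition by rows or by columns. -/
theorem sum_rows_eq_sum_cols (p : Ptn) {A K : ℕ} (hA : ∀ i, A ≤ i → p.parts i = 0)
    (hK : ∀ i, p.parts i ≤ K) (f : ℕ → ℕ → ℚ) :
    ∑ i ∈ range A, ∑ j ∈ range (p.parts i), f i j
      = ∑ j ∈ range K, ∑ i ∈ range (p.conj j), f i j := by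
  refine Finset.sum_comm' fun i j => ?_
  simp only [mem_range, p.lt_conj_iff]
  refine ⟨fun h => ⟨h.2, h.2.trans_le (hK i)⟩, fun h => ⟨?_, h.1⟩⟩
  by_contra! hi
  have := hA i hi
  omega

/-- The beta-numbers of the rows `≥ p.conj c` and those of the columns `< c` tile an interval,
so the increments of any function over them telescope. -/
theorem sum_increments (p : Ptn) {B : ℕ} (hB : ∀ i, B ≤ i → p.parts i = 0) (φ : ℚ → ℚ) (c : ℕ) :
    ∑ k ∈ Ico (p.conj c) B, (φ (p.parts k - k) - φ (p.parts k - k - 1))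
      + ∑ j ∈ range c, (φ (j - p.conj j + 1) - φ (j - p.conj j))
      = φ (c - p.conj c) - φ (-B) := by
  have hrow : ∀ a b c : ℕ, a ≤ b → (∀ k ∈ Ico a b, p.parts k = c) →
      ∑ k ∈ Ico a b, (φ (p.parts k - k) - φ (p.parts k - k - 1)) = φ (c - a) - φ (c - b) := by
    intro a b c hab h
    have : ∀ k ∈ Ico a b, φ (p.parts k - k) - φ (p.parts k - k - 1)
        = -(φ (c - (k + 1 : ℕ)) - φ (c - k)) := by
      intro k hk
      rw [h k hk]; push_cast; rw [sub_sub]; ring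
    rw [sum_congr rfl this, sum_neg_distrib, sum_Ico_sub (fun k : ℕ => φ (c - k)) hab]
    ring
  induction c with
  | zero =>
    rw [hrow _ _ 0 (p.conj_le_of_parts_eq_zero hB 0)]
    · simp
    · intro k hk
      have := (p.lt_conj_iff k 0).not.1 (not_lt.mpr (mem_Ico.1 hk).1)
      omega
  | succ c ih =>
    have hle : p.conj (c + 1) ≤ p.conj c := by
      by_contra! h
      have h1 := (p.lt_conj_iff _ _).1 h
      have h2 := (p.lt_conj_iff (p.conj c) c).not.1 (lt_irrefl _)
      omega
    rw [← sum_Ico_consecutive _ hle (p.conj_le_of_parts_eq_zero hB c), sum_range_succ,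
      hrow _ _ (c + 1) hle]
    · have : ((c + 1 : ℕ) : ℚ) - p.conj c = c - p.conj c + 1 := by push_cast; ring
      rw [this]
      linarith
    · intro k hk
      have h1 := (p.lt_conj_iff k (c + 1)).not.1 (not_lt.mpr (mem_Ico.1 hk).1)
      have h2 := (p.lt_conj_iff k c).1 (mem_Ico.1 hk).2
      omega

end Ptn

theorem min_sub_min_eq_max_sub_max (x y : ℚ) :
    min (x + 1) y - min x y = max (y - x) 0 - max (y - 1 - x) 0 := by
  grind

theorem min_sub_min_eq_one_sub (x y : ℚ) :
    min (y - x) 0 - min (y - x - 1) 0 = 1 - (max (y - x) 0 - max (y - 1 - x) 0) := by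
  grind

/-- The change of `∑ₖ min x (qₖ - k)` under `x ↦ x + 1`, in terms of hook-type quantities
in column `c`. -/
theorem sum_min_succ_sub (q : Ptn) {B : ℕ} (hB : ∀ i, B ≤ i → q.parts i = 0) (c : ℕ) (x : ℚ)
    (hx : -B ≤ x) :
    ∑ k ∈ range B, (min (x + 1) ((q.parts k : ℚ) - k) - min x ((q.parts k : ℚ) - k))
      = q.conj c - (∑ j ∈ range (c + 1), min (x + q.conj j - j) 0
          - ∑ j ∈ range c, min (x + q.conj j - j - 1) 0)
        - ∑ k ∈ range (q.conj c),
            (min ((q.parts k : ℚ) - k - x) 0 - min ((q.parts k : ℚ) - k - x - 1) 0) := by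
  have hinc := q.sum_increments hB (fun z => max (z - x) 0) c
  have hcol : ∑ j ∈ range c, (max ((j : ℚ) - q.conj j + 1 - x) 0 - max ((j : ℚ) - q.conj j - x) 0)
      = ∑ j ∈ range c, min (x + q.conj j - j) 0 - ∑ j ∈ range c, min (x + q.conj j - j - 1) 0 := by
    rw [← sum_sub_distrib]
    refine sum_congr rfl fun j _ => ?_
    generalize (q.conj j : ℚ) = u
    grind
  have hlast : max ((c : ℚ) - q.conj c - x) 0 = - min (x + q.conj c - c) 0 := by
    generalize (q.conj c : ℚ) = u
    grind
  have hzero : max (-(B : ℚ) - x) 0 = 0 := max_eq_right (by linarith)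
  simp only [hcol, hlast, hzero] at hinc
  simp only [min_sub_min_eq_max_sub_max, min_sub_min_eq_one_sub]
  rw [sum_sub_distrib (fun _ => (1 : ℚ)), sum_range_succ _ c,
    ← sum_range_add_sum_Ico _ (q.conj_le_of_parts_eq_zero hB c)]
  simp only [sum_const, card_range, nsmul_eq_mul, mul_one]
  linarith

theorem sum_min_sub_eq_max {A : ℕ} {a y : ℚ} (h : a - y ≤ A) :
    ∑ i ∈ range A, (min (-(i : ℚ) + a) (y + 1) - min (-(i : ℚ) + a) y) = max (a - y) 0 := by
  have : ∀ i ∈ range A, min (-(i : ℚ) + a) (y + 1) - min (-(i : ℚ) + a) y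
      = max (a - y - (i : ℕ)) 0 - max (a - y - (i + 1 : ℕ)) 0 := by
    intro i _
    rw [min_comm, min_comm _ y, min_sub_min_eq_max_sub_max]
    push_cast
    congr 2 <;> ring
  rw [sum_congr rfl this, sum_range_sub' (fun i : ℕ => max (a - y - i) 0)]
  simp [max_eq_right (sub_nonpos.mpr h)]

theorem sum_min_parts_sub_sum_min (q : Ptn) {A B : ℕ} {a : ℚ} (h : a ≤ (A : ℚ) - B + 1) :
    ∑ i ∈ range A, ∑ k ∈ range B,
        (min (-(i : ℚ) + a) ((q.parts k : ℚ) - k) - min (-(i : ℚ) + a) (-(k : ℚ)))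
      = - ∑ k ∈ range B, ∑ j ∈ range (q.parts k), min ((q.parts k : ℚ) - k - j - 1 - a) 0 := by
  rw [sum_comm, ← sum_neg_distrib]
  refine sum_congr rfl fun k hk => ?_
  have hk' : (k : ℚ) + 1 ≤ B := by exact_mod_cast mem_range.1 hk
  have htel : ∀ i : ℕ, min (-(i : ℚ) + a) ((q.parts k : ℚ) - k) - min (-(i : ℚ) + a) (-(k : ℚ))
      = ∑ j ∈ range (q.parts k),
        (min (-(i : ℚ) + a) ((j : ℚ) - k + 1) - min (-(i : ℚ) + a) ((j : ℚ) - k)) := by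
    intro i
    have := sum_range_sub (fun j : ℕ => min (-(i : ℚ) + a) ((j : ℚ) - k)) (q.parts k)
    simp only [Nat.cast_zero, zero_sub] at this
    rw [← this]
    refine sum_congr rfl fun j _ => ?_
    congr 2
    push_cast; ring
  simp only [htel]
  rw [sum_comm, ← sum_range_reflect, ← sum_neg_distrib]
  refine sum_congr rfl fun j hj => ?_
  have hj' := mem_range.1 hj
  have hcast : ((q.parts k - 1 - j : ℕ) : ℚ) = q.parts k - 1 - j := by
    rw [Nat.cast_sub (by omega), Nat.cast_sub (by omega)]; simp
  have hj0 : (0 : ℚ) ≤ (q.parts k - 1 - j : ℕ) := Nat.cast_nonneg _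
  rw [sum_min_sub_eq_max (by linarith), hcast]
  generalize (q.parts k : ℚ) = u
  grind

/-- The contribution of an ordered pair of components. -/
theorem sum_min_pair (p q : Ptn) {A B : ℕ} {a : ℚ} (hA : ∀ i, A ≤ i → p.parts i = 0)
    (hB : ∀ i, B ≤ i → q.parts i = 0) (h₁ : a ≤ (A : ℚ) - B + 1) (h₂ : (A : ℚ) - B - 1 ≤ a) :
    ∑ i ∈ range A, ∑ k ∈ range B,
        (min ((p.parts i : ℚ) - i + a) ((q.parts k : ℚ) - k) - min (-(i : ℚ) + a) (-(k : ℚ)))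
      = ∑ i ∈ range A, ∑ j ∈ range (p.parts i), (q.conj j : ℚ)
        - ∑ i ∈ range A, ∑ j ∈ range (p.parts i), min ((ghook p q i j : ℚ) + a) 0
        - ∑ k ∈ range B, ∑ j ∈ range (q.parts k), min ((ghook q p k j : ℚ) - a) 0 := by
  obtain ⟨K, hKp, hKq⟩ : ∃ K, (∀ i, p.parts i ≤ K) ∧ ∀ i, q.parts i ≤ K :=
    ⟨max (p.parts 0) (q.parts 0), fun i => (p.antitone' i.zero_le).trans (le_max_left _ _),
      fun i => (q.antitone' i.zero_le).trans (le_max_right _ _)⟩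
  have hsplit : ∑ i ∈ range A, ∑ k ∈ range B,
        (min ((p.parts i : ℚ) - i + a) ((q.parts k : ℚ) - k) - min (-(i : ℚ) + a) (-(k : ℚ)))
      = ∑ i ∈ range A, ∑ j ∈ range (p.parts i), ∑ k ∈ range B,
          (min ((j : ℚ) - i + a + 1) ((q.parts k : ℚ) - k)
            - min ((j : ℚ) - i + a) ((q.parts k : ℚ) - k))
        + ∑ i ∈ range A, ∑ k ∈ range B,
          (min (-(i : ℚ) + a) ((q.parts k : ℚ) - k) - min (-(i : ℚ) + a) (-(k : ℚ))) := by
    rw [← sum_add_distrib]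
    refine sum_congr rfl fun i _ => ?_
    rw [sum_comm, ← sum_add_distrib]
    refine sum_congr rfl fun k _ => ?_
    have := sum_range_sub
      (fun j : ℕ => min ((j : ℚ) - i + a) ((q.parts k : ℚ) - k)) (p.parts i)
    simp only [Nat.cast_zero, zero_sub] at this
    rw [← sub_add_sub_cancel _ (min (-(i : ℚ) + a) ((q.parts k : ℚ) - k)), ← this]
    congr 1
    refine sum_congr rfl fun j _ => ?_
    congr 2
    push_cast; ring
  have hbox : ∀ i ∈ range A, ∀ j ∈ range (p.parts i), ∑ k ∈ range B,
          (min ((j : ℚ) - i + a + 1) ((q.parts k : ℚ) - k)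
            - min ((j : ℚ) - i + a) ((q.parts k : ℚ) - k))
      = q.conj j - (∑ c ∈ range (j + 1), min ((j : ℚ) - i + a + q.conj c - c) 0
          - ∑ c ∈ range j, min ((j : ℚ) - i + a + q.conj c - c - 1) 0)
        - ∑ k ∈ range (q.conj j), (min ((q.parts k : ℚ) - k - ((j : ℚ) - i + a)) 0
            - min ((q.parts k : ℚ) - k - ((j : ℚ) - i + a) - 1) 0) := by
    intro i hi j _
    have hi' : (i : ℚ) + 1 ≤ A := by exact_mod_cast mem_range.1 hi
    have hj : (0 : ℚ) ≤ j := Nat.cast_nonneg _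
    exact sum_min_succ_sub q hB j _ (by linarith)
  rw [hsplit, sum_min_parts_sub_sum_min q h₁, sum_congr rfl fun i hi => sum_congr rfl (hbox i hi)]
  have hhook : ∑ i ∈ range A, ∑ j ∈ range (p.parts i), min ((ghook p q i j : ℚ) + a) 0
      = ∑ i ∈ range A, ∑ c ∈ range (p.parts i),
          ∑ j ∈ range (c + 1), min ((c : ℚ) - i + a + q.conj j - j) 0
        - ∑ i ∈ range A, ∑ c ∈ range (p.parts i),
          ∑ j ∈ range c, min ((c : ℚ) - i + a + q.conj j - j - 1) 0 := by
    rw [← sum_sub_distrib]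
    refine sum_congr rfl fun i _ => ?_
    rw [← sum_sub_distrib]
    have := sum_range_sub (fun c : ℕ => ∑ j ∈ range c,
      min ((c : ℚ) - i + a + q.conj j - j - 1) 0) (p.parts i)
    simp only [range_zero, sum_empty, sub_zero] at this
    refine Eq.trans (Eq.trans (sum_congr rfl fun j _ => ?_) this.symm) (sum_congr rfl fun c _ => ?_)
    · unfold ghook
      congr 1
      push_cast; ring
    · congr 1
      refine sum_congr rfl fun j _ => ?_
      congr 1
      push_cast; ring
  have hdual : ∑ k ∈ range B, ∑ j ∈ range (q.parts k), min ((ghook q p k j : ℚ) - a) 0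
      = ∑ k ∈ range B, ∑ j ∈ range (q.parts k), min ((q.parts k : ℚ) - k - j - 1 - a) 0
        + ∑ i ∈ range A, ∑ j ∈ range (p.parts i), ∑ k ∈ range (q.conj j),
            (min ((q.parts k : ℚ) - k - ((j : ℚ) - i + a)) 0
              - min ((q.parts k : ℚ) - k - ((j : ℚ) - i + a) - 1) 0) := by
    rw [q.sum_rows_eq_sum_cols hB hKq, q.sum_rows_eq_sum_cols hB hKq,
      p.sum_rows_eq_sum_cols hA hKp, ← sum_add_distrib]
    refine sum_congr rfl fun j _ => ?_
    rw [sum_comm, ← sum_add_distrib]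
    refine sum_congr rfl fun k _ => ?_
    have := sum_range_sub (fun r : ℕ => min ((q.parts k : ℚ) - k - j - 1 - a + r) 0) (p.conj j)
    simp only [Nat.cast_zero, add_zero] at this
    rw [← sub_eq_iff_eq_add']
    refine Eq.trans (Eq.trans ?_ this.symm) (sum_congr rfl fun r _ => ?_)
    · unfold ghook
      congr 2
      push_cast; ring
    · congr 2 <;> push_cast <;> ring
  simp only [sum_sub_distrib] at hdual ⊢
  linarith

theorem two_mul_sum_getD_of_pairwise_ge (L : List ℚ) (hL : L.Pairwise (· ≥ ·)) :
    2 * ∑ i ∈ range L.length, (i : ℚ) * L.getD i 0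
      = (L.map fun x => (L.map fun y => min x y).sum).sum - L.sum := by
  induction L with
  | nil => simp
  | cons x L ih =>
    obtain ⟨hx, hL⟩ := List.pairwise_cons.1 hL
    have ih := ih hL
    have hsum : ∑ i ∈ range L.length, L.getD i 0 = L.sum := by
      rw [← Fin.sum_univ_eq_sum_range (fun i => L.getD i 0)]
      simp
    have h₁ : (L.map fun y => min x y) = L := by
      conv_rhs => rw [← List.map_id L]
      exact List.map_congr_left fun y hy => min_eq_right (hx y hy)
    have h₂ : (L.map fun y => min y x) = L := by
      simpa only [min_comm] using h₁
    simp only [List.length_cons, sum_range_succ', List.map_cons, List.sum_cons,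
      List.sum_map_add, h₁, h₂, List.getD_cons_succ, Nat.cast_add, Nat.cast_one, add_mul, one_mul,
      sum_add_distrib, hsum, min_self, Nat.cast_zero, zero_mul]
    linarith

theorem two_mul_nmOf (M : Multiset ℚ) :
    2 * nmOf M = (M.map fun x => (M.map fun y => min x y).sum).sum - M.sum := by
  rw [nmOf, two_mul_sum_getD_of_pairwise_ge _ (M.pairwise_sort _)]
  conv_rhs => rw [← M.sort_eq (· ≥ ·)]
  simp only [Multiset.map_coe, Multiset.sum_coe]

theorem sum_map_sum_map_range {ι : Type*} [Fintype ι] (A : ι → ℕ) (g : ι → ℕ → ℚ) (f : ℚ → ℚ) :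
    ((∑ j, (Multiset.range (A j)).map (g j)).map f).sum = ∑ j, ∑ i ∈ range (A j), f (g j i) := by
  have := map_sum (Multiset.sumAddMonoidHom.comp (Multiset.mapAddMonoidHom f))
    (fun j => (Multiset.range (A j)).map (g j)) univ
  simp only [AddMonoidHom.comp_apply, Multiset.coe_sumAddMonoidHom,
    Multiset.coe_mapAddMonoidHom, Multiset.map_map] at this
  exact this

theorem two_mul_nmOf_sum {ι : Type*} [Fintype ι] (A : ι → ℕ) (g : ι → ℕ → ℚ) :
    2 * nmOf (∑ j, (Multiset.range (A j)).map (g j))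
      = ∑ s, ∑ t, ∑ i ∈ range (A s), ∑ k ∈ range (A t), min (g s i) (g t k)
        - ∑ s, ∑ i ∈ range (A s), g s i := by
  rw [two_mul_nmOf]
  simp only [sum_map_sum_map_range]
  have := sum_map_sum_map_range A g id
  rw [Multiset.map_id] at this
  rw [this]
  congr 1
  exact sum_congr rfl fun s _ => sum_comm

theorem two_mul_nn_add (b : Ptn) {K : ℕ} (hK : ∀ i, b.parts i ≤ K) :
    2 * (b.nn : ℚ) + ∑ c ∈ range K, (b.conj c : ℚ) = ∑ c ∈ range K, (b.conj c : ℚ) ^ 2 := by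
  obtain ⟨A, hA⟩ := b.eventually_zero
  have hnn : b.nn = ∑ i ∈ range A, i * b.parts i := by
    refine finsum_eq_sum_of_support_subset _ fun i hi => ?_
    by_contra h
    simp_all
  have hrow : 2 * (b.nn : ℚ) = ∑ i ∈ range A, ∑ _j ∈ range (b.parts i), 2 * (i : ℚ) := by
    rw [hnn]
    push_cast
    rw [mul_sum]
    refine sum_congr rfl fun i _ => ?_
    rw [sum_const, card_range, nsmul_eq_mul]
    ring
  rw [hrow, b.sum_rows_eq_sum_cols hA hK, ← sum_add_distrib]
  refine sum_congr rfl fun c _ => ?_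
  induction b.conj c with
  | zero => simp
  | succ k ih =>
    rw [sum_range_succ]
    push_cast
    linarith

theorem one_le_ghook_self (p : Ptn) {i j : ℕ} (h : j < p.parts i) : 1 ≤ ghook p p i j := by
  have := (p.lt_conj_iff i j).2 h
  unfold ghook
  omega

/-- With `B^j_i = λ^j_i - i + N + m_j` for `i = 1, …, N + ⌊m_j⌋`
(all parts of `λ^j` lying in this range), `κ_m(λ)` the decreasing rearrangement of all
the `B^j_i`, and `n_m(λ) = Σ_i (i-1) κ_i`, one has
`n_m(λ) - n_m(∅) = n(λ̄) - Σ_s Σ_{(i,j)∈[λ^s]} Σ_{t≠s} min(h^{λ^s,λ^t}_{i,j} + m_s - m_t, 0)`,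
where `n_m(∅)` is computed for the empty `l`-partition with the same size `N`, and `λ̄` is
the rearrangement of the parts, characterised by `λ̄'_k = Σ_s λ^{s'}_k`. -/
theorem stmt11 (l n N : ℕ) (hN : 0 < N) (m : Fin l → ℚ)
    (Λ : Fin l → Ptn) (hn : ∑ s, (Λ s).size = n)
    (Nj : Fin l → ℕ) (hNj : ∀ j, (Nj j : ℤ) = (N : ℤ) + ⌊m j⌋)
    (hlen : ∀ j i, Nj j ≤ i → (Λ j).parts i = 0)
    (b : Ptn) (hb : ∀ k, b.conj k = ∑ s, (Λ s).conj k) :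
    nmOf (∑ j : Fin l, (Multiset.range (Nj j)).map
        (fun i => ((Λ j).parts i : ℚ) - ((i : ℚ) + 1) + (N : ℚ) + m j))
      - nmOf (∑ j : Fin l, (Multiset.range (Nj j)).map
        (fun i => (0 : ℚ) - ((i : ℚ) + 1) + (N : ℚ) + m j))
    = (b.nn : ℚ) - ∑ s, ∑ᶠ i, ∑ j ∈ Finset.range ((Λ s).parts i),
        ∑ t ∈ Finset.univ.erase s,
          min (((ghook (Λ s) (Λ t) i j : ℤ) : ℚ) + m s - m t) 0 := by
  obtain ⟨K, hK, hKb⟩ : ∃ K, (∀ s i, (Λ s).parts i ≤ K) ∧ ∀ i, b.parts i ≤ K := by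
    refine ⟨max (univ.sup fun s => (Λ s).parts 0) (b.parts 0), fun s i => ?_, fun i => ?_⟩
    · exact ((Λ s).antitone' i.zero_le).trans ((le_sup (f := fun s => (Λ s).parts 0)
        (mem_univ s)).trans (le_max_left _ _))
    · exact (b.antitone' i.zero_le).trans (le_max_right _ _)
  set E : Fin l → Fin l → ℚ := fun s t => ∑ i ∈ range (Nj s), ∑ j ∈ range ((Λ s).parts i),
    min ((ghook (Λ s) (Λ t) i j : ℚ) + (m s - m t)) 0 with hE
  have hEself : ∀ s, E s s = 0 := by
    refine fun s => sum_eq_zero fun i _ => sum_eq_zero fun j hj => min_eq_right ?_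
    have : (1 : ℚ) ≤ ghook (Λ s) (Λ s) i j := by
      exact_mod_cast one_le_ghook_self (Λ s) (mem_range.1 hj)
    linarith
  have hfloor : ∀ s, (Nj s : ℚ) ≤ N + m s ∧ N + m s ≤ (Nj s : ℚ) + 1 := by
    intro s
    have h : (Nj s : ℚ) = N + (⌊m s⌋ : ℚ) := by exact_mod_cast hNj s
    have h₁ := Int.floor_le (m s)
    have h₂ := Int.lt_floor_add_one (m s)
    constructor <;> linarith
  have hcross : ∑ s, ∑ᶠ i, ∑ j ∈ range ((Λ s).parts i), ∑ t ∈ univ.erase s,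
      min (((ghook (Λ s) (Λ t) i j : ℤ) : ℚ) + m s - m t) 0 = ∑ s, ∑ t, E s t := by
    refine sum_congr rfl fun s _ => ?_
    rw [finsum_eq_sum_of_support_subset (s := range (Nj s)), ← sum_erase univ (hEself s), hE,
      sum_comm]
    · refine sum_congr rfl fun i _ => ?_
      rw [sum_comm]
      simp only [add_sub_assoc]
    · intro i hi
      by_contra h
      simp_all
  have hpair : ∀ s t, ∑ i ∈ range (Nj s), ∑ k ∈ range (Nj t),
      (min (((Λ s).parts i : ℚ) - ((i : ℚ) + 1) + N + m s)
          (((Λ t).parts k : ℚ) - ((k : ℚ) + 1) + N + m t)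
        - min ((0 : ℚ) - ((i : ℚ) + 1) + N + m s) ((0 : ℚ) - ((k : ℚ) + 1) + N + m t))
      = ∑ c ∈ range K, ((Λ s).conj c : ℚ) * (Λ t).conj c - E s t - E t s := by
    intro s t
    have hs := hfloor s
    have ht := hfloor t
    have h := sum_min_pair (Λ s) (Λ t) (a := m s - m t) (hlen s) (hlen t)
      (by linarith [hs.1, hs.2, ht.1, ht.2]) (by linarith [hs.1, hs.2, ht.1, ht.2])
    rw [(Λ s).sum_rows_eq_sum_cols (hlen s) (hK s) (fun _ j => ((Λ t).conj j : ℚ))] at h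
    simp only [sum_const, card_range, nsmul_eq_mul, sub_eq_add_neg _ (m s - m t), neg_sub] at h
    rw [← h]
    refine sum_congr rfl fun i _ => sum_congr rfl fun k _ => ?_
    generalize ((Λ s).parts i : ℚ) = u
    generalize ((Λ t).parts k : ℚ) = v
    have shift : ∀ x y z : ℚ, min (x + z) (y + z) = min x y + z := fun x y z =>
      (min_add_add_right x y z)
    have e₁ := shift (u - i + (m s - m t)) (v - k) (N + m t - 1)
    have e₂ := shift (-i + (m s - m t)) (-k) (N + m t - 1)
    ring_nf at e₁ e₂ ⊢
    linarith
  have hsize : ∑ s, ∑ i ∈ range (Nj s), ((Λ s).parts i : ℚ) = ∑ c ∈ range K, (b.conj c : ℚ) := by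
    simp only [hb, Nat.cast_sum]
    rw [sum_comm]
    refine sum_congr rfl fun s _ => ?_
    have := (Λ s).sum_rows_eq_sum_cols (hlen s) (hK s) (fun _ _ => 1)
    simpa using this
  have hsq : ∑ s, ∑ t, ∑ c ∈ range K, ((Λ s).conj c : ℚ) * (Λ t).conj c
      = ∑ c ∈ range K, (b.conj c : ℚ) ^ 2 := by
    simp only [hb, Nat.cast_sum, sq, sum_mul_sum]
    rw [sum_comm]
    simp only [sum_comm (s := range K)]
    exact sum_comm
  have hlin : ∑ s, ∑ i ∈ range (Nj s), (((Λ s).parts i : ℚ) - ((i : ℚ) + 1) + N + m s)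
      - ∑ s, ∑ i ∈ range (Nj s), ((0 : ℚ) - ((i : ℚ) + 1) + N + m s)
      = ∑ c ∈ range K, (b.conj c : ℚ) := by
    simp only [← hsize, ← sum_sub_distrib]
    refine sum_congr rfl fun s _ => sum_congr rfl fun i _ => ?_
    ring
  have hquad := sum_congr rfl fun s (_ : s ∈ univ) =>
    sum_congr rfl fun t (_ : t ∈ univ) => hpair s t
  simp only [sum_sub_distrib] at hquad
  rw [hsq, sum_comm (f := fun s t => E t s)] at hquad
  have hL := two_mul_nmOf_sum Nj fun j i => ((Λ j).parts i : ℚ) - ((i : ℚ) + 1) + (N : ℚ) + m j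
  have hO := two_mul_nmOf_sum Nj fun j i => (0 : ℚ) - ((i : ℚ) + 1) + (N : ℚ) + m j
  have hbn := two_mul_nn_add b hKb
  rw [hcross]
  simp only [Multiset.bind_def, Multiset.pure_def, Multiset.bind_singleton, Multiset.map_map,
    Function.comp_def]
  linarith
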